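/- Let c ∈ O_K be primary and let j ∈ {1, 2}. Then for every r ∈ O_K, the Gauss sum of the character ψ_j·(·/c) modulo 2c satisfies g(r, ψ_j·(·/c)) = (i/c) · ((−1)^{Im(r)} + (−1)^{Re(r)+j−1}) · g(r, c). -/

import Mathlib

open Complex Real Filter Topology
open scoped BigOperators Classical

noncomputable section

/-- The norm `N(n)` of a Gaussian integer, as a real number. -/
def Nm (n : GaussianInt) : ℝ := ((Zsqrtd.norm n : ℤ) : ℝ)

/-- The element `1 + i` of `ℤ[i]`. -/
def ωg : GaussianInt := ⟨1, 1⟩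

/-- The element `i` of `ℤ[i]`. -/
def ig : GaussianInt := ⟨0, 1⟩

/-- `n` is primary: `n ≡ 1 mod (1+i)³`. -/
def IsPrimary (n : GaussianInt) : Prop := ωg ^ 3 ∣ (n - 1)

/-- `ẽ(z) = exp(2πi(z/(2i) − z̄/(2i)))`. -/
def eT (z : ℂ) : ℂ :=
  Complex.exp (2 * (Real.pi : ℂ) * Complex.I *
    (z / (2 * Complex.I) - (starRingEnd ℂ) z / (2 * Complex.I)))

/-- `χ a n = (a/n)` is the quadratic residue symbol of `ℤ[i]`: on odd primes `ϖ` it is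
the `±1` (or `0`) value determined by `(a/ϖ) ≡ a^((N(ϖ)-1)/2) mod ϖ`, it is extended
multiplicatively in the denominator over odd elements, and equals `1` on units. -/
structure IsQuadSym (χ : GaussianInt → GaussianInt → ℤ) : Prop where
  val_prime : ∀ ϖ a : GaussianInt, Prime ϖ → ¬ ωg ∣ ϖ → ¬ ϖ ∣ a →
    (χ a ϖ = 1 ∨ χ a ϖ = -1) ∧
      ϖ ∣ (a ^ (((Zsqrtd.norm ϖ).toNat - 1) / 2) - (χ a ϖ : GaussianInt))
  zero_of_dvd : ∀ ϖ a : GaussianInt, Prime ϖ → ϖ ∣ a → χ a ϖ = 0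
  mul_den : ∀ a m n : GaussianInt, ¬ ωg ∣ m → ¬ ωg ∣ n → χ a (m * n) = χ a m * χ a n
  unit_den : ∀ a u : GaussianInt, IsUnit u → χ a u = 1

/-- `L s m = L(s, χ_m)`: the Hecke `L`-function attached to the quadratic symbol `(m/·)`,
given by its Dirichlet series over primary elements (= odd ideals) for `Re s > 1`,
and analytic away from `s = 1`. -/
def IsHeckeL (χ : GaussianInt → GaussianInt → ℤ) (L : ℂ → GaussianInt → ℂ) : Prop :=
  (∀ (m : GaussianInt) (s : ℂ), 1 < s.re →
      L s m = ∑' n : {n : GaussianInt // IsPrimary n}, (χ m n.1 : ℂ) / (Nm n.1 : ℂ) ^ s) ∧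
    ∀ m : GaussianInt, DifferentiableOn ℂ (fun s => L s m) {s : ℂ | s ≠ 1}

/-- The generalized Riemann hypothesis for the family of quadratic Hecke `L`-functions. -/
def GRHfor (L : ℂ → GaussianInt → ℂ) : Prop :=
  ∀ m : GaussianInt, m ≠ 0 → ∀ s : ℂ, 0 < s.re → s.re < 1 → L s m = 0 → s.re = 1 / 2

/-- The absolute norm of an ideal of `ℤ[i]`, as a complex number. -/
def idN (I : Ideal GaussianInt) : ℂ := (Nat.card (GaussianInt ⧸ I) : ℂ)

/-- The Dedekind zeta function of `ℚ(i)`. -/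
def IsDedekindZetaK (Z : ℂ → ℂ) : Prop :=
  (∀ s : ℂ, 1 < s.re → Z s = ∑' I : {I : Ideal GaussianInt // I ≠ ⊥}, idN I.1 ^ (-s)) ∧
    DifferentiableOn ℂ Z {s : ℂ | s ≠ 1}

/-- `ζ_K^{(2)}`: the Euler product of `ζ_K` with the factor at the prime `(1+i)` omitted. -/
def zeta2 (Z : ℂ → ℂ) (s : ℂ) : ℂ := Z s * (1 - (2 : ℂ) ^ (-s))

/-- `P(z) = ∏_ϖ (1 + ((N(ϖ)^{z-1/2} − 1)(N(ϖ) + 1))⁻¹)`, over all primes of `ℤ[i]`. -/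
def Pfun (z : ℂ) : ℂ :=
  ∏' I : {I : Ideal GaussianInt // I ≠ ⊥ ∧ I.IsPrime},
    (1 + 1 / ((idN I.1 ^ (z - 1 / 2) - 1) * (idN I.1 + 1)))

/-- The Euler product over odd primes appearing in the ratios-conjecture main term. -/
def ratioEuler (α β : ℂ) : ℂ :=
  ∏' I : {I : Ideal GaussianInt // I ≠ ⊥ ∧ I.IsPrime ∧ (2 : GaussianInt) ∉ I},
    (1 + (idN I.1 ^ (α - β) - 1) / (idN I.1 ^ (1 + α - β) * (idN I.1 ^ (1 + α + β) - 1)))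

/-- `g r n` is the quadratic Gauss sum `g(r,n) = ∑_{x mod n} (x/n) ẽ(rx/n)`:
for any complete residue system `S` modulo `n` it is given by the indicated finite sum. -/
def IsGaussSum (χ : GaussianInt → GaussianInt → ℤ) (g : GaussianInt → GaussianInt → ℂ) : Prop :=
  ∀ r n : GaussianInt, n ≠ 0 → ∀ S : Finset GaussianInt,
    (∀ z : GaussianInt, ∃! x, x ∈ S ∧ n ∣ (z - x)) →
    g r n = ∑ x ∈ S, (χ x n : ℂ) * eT (GaussianInt.toComplex (r * x) / GaussianInt.toComplex n)

/-- A Dirichlet character modulo `q` on `ℤ[i]` (extended by zero). -/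
def IsDirichletChar (q : GaussianInt) (χ : GaussianInt → ℂ) : Prop :=
  χ 1 = 1 ∧ (∀ a b : GaussianInt, χ (a * b) = χ a * χ b) ∧
    (∀ a b : GaussianInt, q ∣ (a - b) → χ a = χ b) ∧
    (∀ a : GaussianInt, IsCoprime a q → ‖χ a‖ = 1) ∧
    (∀ a : GaussianInt, ¬ IsCoprime a q → χ a = 0)

/-- The Gauss sum `g(r,χ) = ∑_{x mod q} χ(x) ẽ(rx/q)` of a Dirichlet character modulo `q`. -/
def IsGaussSumChar (q : GaussianInt) (χ : GaussianInt → ℂ) (g : GaussianInt → ℂ) : Prop :=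
  ∀ r : GaussianInt, ∀ S : Finset GaussianInt,
    (∀ z : GaussianInt, ∃! x, x ∈ S ∧ q ∣ (z - x)) →
    g r = ∑ x ∈ S, χ x * eT (GaussianInt.toComplex (r * x) / GaussianInt.toComplex q)

/-- A primary `n = a + bi` is of type 1 if `a ≡ 1, b ≡ 0 (mod 4)` (else it is of type 2). -/
def IsTypeOne (n : GaussianInt) : Prop := n.re % 4 = 1 ∧ n.im % 4 = 0

/-- `ψ₁`, the principal character modulo `2` on `ℤ[i]`. -/
def psi1 (m : GaussianInt) : ℂ := if IsCoprime m 2 then 1 else 0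

/-- `ψ₂`, the primitive quadratic character modulo `2` on `ℤ[i]`:
`ψ₂(m) = 1` for `m ≡ 1 (mod 2)`, `ψ₂(m) = −1` for `m ≡ i (mod 2)`, and `0` otherwise. -/
def psi2 (m : GaussianInt) : ℂ :=
  if (2 : GaussianInt) ∣ (m - 1) then 1 else if (2 : GaussianInt) ∣ (m - ig) then -1 else 0

/-- `χ̃_n = ψ_j · (·/n)`, where `j` is the type of the primary element `n`. -/
def tchi (χ : GaussianInt → GaussianInt → ℤ) (n m : GaussianInt) : ℂ :=
  (if IsTypeOne n then psi1 m else psi2 m) * (χ m n : ℂ)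

/-!
`ψ` and `(·/c)` are characters to the coprime moduli `2` and `c`, so the Chinese remainder theorem
splits the Gauss sum of their product as `ψ(c) · (2/c) · g(r, ψ) · g(r, c)`. Here `(2/c) = (i/c)`
because `2i = (1 + i)²`, and `ψ(c) = 1` because `c ≡ 1 mod 2`. Only the residues `1` and `i`
contribute to `g(r, ψ)`, which is `(-1)^{Im r} + ψ(i) (-1)^{Re r}` because
`ẽ(x/2) = (-1)^{Im x}`.
-/

/-- `S` is a complete residue system modulo `q`; this is the condition on `S` spelled out in
`IsGaussSum` and `IsGaussSumChar`. -/
def IsResidueSystem {R : Type*} [CommRing R] (q : R) (S : Finset R) : Prop :=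
  ∀ z : R, ∃! x, x ∈ S ∧ q ∣ z - x

section ResidueSystem

variable {R : Type*} [CommRing R] {q : R} {S : Finset R}

theorem exists_isResidueSystem [Ring.HasFiniteQuotients R] (hq : q ≠ 0) :
    ∃ S : Finset R, IsResidueSystem q S := by
  have : Finite (R ⧸ Ideal.span {q}) :=
    Ring.HasFiniteQuotients.finiteQuotient (by simpa using hq)
  have := Fintype.ofFinite (R ⧸ Ideal.span {q})
  have dvd_iff (z x : R) : q ∣ z - x ↔
      Ideal.Quotient.mk (Ideal.span {q}) z = Ideal.Quotient.mk (Ideal.span {q}) x := by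
    rw [Ideal.Quotient.eq, Ideal.mem_span_singleton]
  have mk_out (a : R ⧸ Ideal.span {q}) : Ideal.Quotient.mk (Ideal.span {q}) a.out = a :=
    Quotient.out_eq a
  refine ⟨Finset.univ.image fun a : R ⧸ Ideal.span {q} => a.out, fun z => ?_⟩
  refine ⟨(Ideal.Quotient.mk (Ideal.span {q}) z).out, ⟨by simp, by rw [dvd_iff, mk_out]⟩, ?_⟩
  rintro x ⟨hx, hzx⟩
  obtain ⟨a, -, rfl⟩ := Finset.mem_image.1 hx
  rw [dvd_iff, mk_out] at hzx
  rw [hzx]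

namespace IsResidueSystem

theorem exists_mem_dvd_sub (hS : IsResidueSystem q S) (z : R) : ∃ x ∈ S, q ∣ z - x :=
  (hS z).exists

theorem eq_of_dvd_sub (hS : IsResidueSystem q S) {x y : R} (hx : x ∈ S) (hy : y ∈ S)
    (h : q ∣ x - y) : x = y :=
  (hS x).unique ⟨hx, by simp⟩ ⟨hy, h⟩

theorem sum_eq_sum {M : Type*} [AddCommMonoid M] {T : Finset R} (hS : IsResidueSystem q S)
    (hT : IsResidueSystem q T) {f : R → M} (hf : ∀ x y, q ∣ x - y → f x = f y) :
    ∑ x ∈ S, f x = ∑ x ∈ T, f x := by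
  choose t t_mem dvd_sub_t using hT.exists_mem_dvd_sub
  refine Finset.sum_bij (fun x _ => t x) (fun x _ => t_mem x) (fun x hx y hy hxy => ?_)
    (fun y hy => ?_) (fun x _ => hf _ _ (dvd_sub_t x))
  · have := dvd_sub (dvd_sub_t x) (dvd_sub_t y)
    rw [hxy, sub_sub_sub_cancel_right] at this
    exact hS.eq_of_dvd_sub hx hy this
  · obtain ⟨x, hx, hyx⟩ := hS.exists_mem_dvd_sub y
    refine ⟨x, hx, hT.eq_of_dvd_sub (t_mem x) hy ?_⟩
    rw [← dvd_neg, neg_sub, ← sub_add_sub_cancel y x (t x)]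
    exact dvd_add hyx (dvd_sub_t x)

variable {c : R} {T : Finset R}

theorem eq_and_eq_of_dvd_sub (hqc : IsCoprime q c) (hS : IsResidueSystem q S)
    (hT : IsResidueSystem c T) {y y' z z' : R} (hy : y ∈ S) (hy' : y' ∈ S) (hz : z ∈ T)
    (hz' : z' ∈ T) (h : q * c ∣ (c * y + q * z) - (c * y' + q * z')) : y = y' ∧ z = z' := by
  obtain ⟨k, hk⟩ := h
  constructor
  · refine hS.eq_of_dvd_sub hy hy' (hqc.dvd_of_dvd_mul_left ⟨c * k - (z - z'), ?_⟩)
    linear_combination hk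
  · refine hT.eq_of_dvd_sub hz hz' (hqc.symm.dvd_of_dvd_mul_left ⟨q * k - (y - y'), ?_⟩)
    linear_combination hk

theorem injOn_mul_add_mul (hqc : IsCoprime q c) (hS : IsResidueSystem q S)
    (hT : IsResidueSystem c T) :
    Set.InjOn (fun t : R × R => c * t.1 + q * t.2) (S ×ˢ T : Finset (R × R)) := by
  rintro ⟨y, z⟩ h ⟨y', z'⟩ h' (heq : c * y + q * z = c * y' + q * z')
  obtain ⟨hy, hz⟩ := Finset.mem_product.1 h
  obtain ⟨hy', hz'⟩ := Finset.mem_product.1 h'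
  have hdvd : q * c ∣ (c * y + q * z) - (c * y' + q * z') := by simp [heq]
  exact Prod.ext_iff.2 (eq_and_eq_of_dvd_sub hqc hS hT hy hy' hz hz' hdvd)

theorem image_mul_add_mul [DecidableEq R] (hqc : IsCoprime q c) (hS : IsResidueSystem q S)
    (hT : IsResidueSystem c T) :
    IsResidueSystem (q * c) ((S ×ˢ T).image fun t => c * t.1 + q * t.2) := by
  intro w
  obtain ⟨u, v, huv⟩ := id hqc
  obtain ⟨y, hy, k, hk⟩ := hS.exists_mem_dvd_sub (w * v)
  obtain ⟨z, hz, l, hl⟩ := hT.exists_mem_dvd_sub (w * u)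
  have hw : q * c ∣ w - (c * y + q * z) :=
    ⟨k + l, by linear_combination c * hk + q * hl - w * huv⟩
  refine ⟨c * y + q * z, ⟨Finset.mem_image.2 ⟨(y, z), Finset.mk_mem_product hy hz, rfl⟩, hw⟩, ?_⟩
  rintro x ⟨hx, hwx⟩
  obtain ⟨⟨y', z'⟩, hyz', rfl⟩ := Finset.mem_image.1 hx
  obtain ⟨hy', hz'⟩ := Finset.mem_product.1 hyz'
  have hdvd := dvd_sub hw hwx
  rw [sub_sub_sub_cancel_left] at hdvd
  obtain ⟨rfl, rfl⟩ := eq_and_eq_of_dvd_sub hqc hS hT hy' hy hz' hz hdvd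
  rfl

end IsResidueSystem

end ResidueSystem

instance : Module.Finite ℤ GaussianInt := by
  let f : ℤ × ℤ →ₗ[ℤ] GaussianInt :=
    (LinearMap.toSpanSingleton ℤ GaussianInt 1).coprod (LinearMap.toSpanSingleton ℤ GaussianInt ig)
  refine Module.Finite.of_surjective f fun z => ⟨(z.re, z.im), ?_⟩
  ext <;> simp [f, ig]

theorem eT_eq_exp (z : ℂ) : eT z = Complex.exp (2 * π * I * z.im) := by
  rw [eT, ← sub_div, Complex.sub_conj]
  push_cast
  field_simp

theorem eT_add (z w : ℂ) : eT (z + w) = eT z * eT w := by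
  simp only [eT_eq_exp, Complex.add_im, Complex.ofReal_add, mul_add, Complex.exp_add]

theorem eT_toComplex (x : GaussianInt) : eT (GaussianInt.toComplex x) = 1 := by
  rw [eT_eq_exp, ← GaussianInt.intCast_im, Complex.ofReal_intCast, mul_comm,
    Complex.exp_int_mul_two_pi_mul_I]

theorem eT_toComplex_div_two (x : GaussianInt) :
    eT (GaussianInt.toComplex x / 2) = (-1 : ℂ) ^ x.im := by
  rw [eT_eq_exp, ← Complex.exp_pi_mul_I, ← Complex.exp_int_mul]
  congr 1
  rw [Complex.div_ofNat_im, ← GaussianInt.intCast_im]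
  push_cast
  ring

theorem eT_toComplex_mul_div_eq {q : GaussianInt} (hq : q ≠ 0) (r : GaussianInt)
    {x y : GaussianInt} (h : q ∣ x - y) :
    eT (GaussianInt.toComplex (r * x) / GaussianInt.toComplex q) =
      eT (GaussianInt.toComplex (r * y) / GaussianInt.toComplex q) := by
  have hq' : GaussianInt.toComplex q ≠ 0 := by simpa using hq
  obtain ⟨k, hk⟩ := h
  have hsplit : GaussianInt.toComplex (r * x) / GaussianInt.toComplex q =
      GaussianInt.toComplex (r * y) / GaussianInt.toComplex q + GaussianInt.toComplex (r * k) := by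
    rw [sub_eq_iff_eq_add'.1 hk]
    simp only [map_mul, map_add]
    field_simp
  rw [hsplit, eT_add, eT_toComplex, mul_one]

theorem eT_toComplex_mul_add_mul_div {q c : GaussianInt} (hq : q ≠ 0) (hc : c ≠ 0)
    (r y z : GaussianInt) :
    eT (GaussianInt.toComplex (r * (c * y + q * z)) / GaussianInt.toComplex (q * c)) =
      eT (GaussianInt.toComplex (r * y) / GaussianInt.toComplex q) *
        eT (GaussianInt.toComplex (r * z) / GaussianInt.toComplex c) := by
  have hq' : GaussianInt.toComplex q ≠ 0 := by simpa using hq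
  have hc' : GaussianInt.toComplex c ≠ 0 := by simpa using hc
  rw [← eT_add]
  congr 1
  simp only [map_mul, map_add]
  field_simp

namespace IsDirichletChar

variable {q c : GaussianInt} {ψ φ : GaussianInt → ℂ}

theorem map_one (hψ : IsDirichletChar q ψ) : ψ 1 = 1 := hψ.1

theorem map_mul (hψ : IsDirichletChar q ψ) (a b : GaussianInt) : ψ (a * b) = ψ a * ψ b :=
  hψ.2.1 a b

theorem eq_of_dvd_sub (hψ : IsDirichletChar q ψ) {a b : GaussianInt} (h : q ∣ a - b) :
    ψ a = ψ b :=
  hψ.2.2.1 a b h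

theorem norm_eq_one (hψ : IsDirichletChar q ψ) {a : GaussianInt} (h : IsCoprime a q) :
    ‖ψ a‖ = 1 :=
  hψ.2.2.2.1 a h

theorem eq_zero (hψ : IsDirichletChar q ψ) {a : GaussianInt} (h : ¬ IsCoprime a q) : ψ a = 0 :=
  hψ.2.2.2.2 a h

theorem of_isUnit (hq : IsUnit q) : IsDirichletChar q fun _ => 1 := by
  refine ⟨rfl, by simp, by simp, by simp, fun a ha => (ha ?_).elim⟩
  exact ⟨0, ↑hq.unit⁻¹, by simp⟩

theorem mul (hψ : IsDirichletChar q ψ) (hφ : IsDirichletChar c φ) :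
    IsDirichletChar (q * c) (ψ * φ) := by
  refine ⟨by simp [hψ.map_one, hφ.map_one], fun a b => ?_, fun a b h => ?_, fun a h => ?_,
    fun a h => ?_⟩
  · simp only [Pi.mul_apply, hψ.map_mul, hφ.map_mul, mul_mul_mul_comm]
  · rw [Pi.mul_apply, Pi.mul_apply, hψ.eq_of_dvd_sub (dvd_of_mul_right_dvd h),
      hφ.eq_of_dvd_sub (dvd_of_mul_left_dvd h)]
  · obtain ⟨hq, hc⟩ := IsCoprime.mul_right_iff.1 h
    rw [Pi.mul_apply, norm_mul, hψ.norm_eq_one hq, hφ.norm_eq_one hc, mul_one]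
  · rw [IsCoprime.mul_right_iff, not_and_or] at h
    rcases h with hq | hc
    · rw [Pi.mul_apply, hψ.eq_zero hq, zero_mul]
    · rw [Pi.mul_apply, hφ.eq_zero hc, mul_zero]

theorem isGaussSumChar (hψ : IsDirichletChar q ψ) (hq : q ≠ 0) {S : Finset GaussianInt}
    (hS : IsResidueSystem q S) :
    IsGaussSumChar q ψ fun r =>
      ∑ x ∈ S, ψ x * eT (GaussianInt.toComplex (r * x) / GaussianInt.toComplex q) := by
  intro r T hT
  refine hS.sum_eq_sum hT fun x y hxy => ?_
  rw [hψ.eq_of_dvd_sub hxy, eT_toComplex_mul_div_eq hq r hxy]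

theorem gaussSum_mul (hq : q ≠ 0) (hc : c ≠ 0) (hqc : IsCoprime q c)
    (hψ : IsDirichletChar q ψ) (hφ : IsDirichletChar c φ) {g g₁ g₂ : GaussianInt → ℂ}
    (hg : IsGaussSumChar (q * c) (ψ * φ) g) (hg₁ : IsGaussSumChar q ψ g₁)
    (hg₂ : IsGaussSumChar c φ g₂) (r : GaussianInt) :
    g r = ψ c * φ q * (g₁ r * g₂ r) := by
  obtain ⟨S, hS⟩ := exists_isResidueSystem hq
  obtain ⟨T, hT⟩ := exists_isResidueSystem hc
  have hψφ (y z : GaussianInt) :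
      (ψ * φ) (c * y + q * z) = ψ c * φ q * (ψ y * φ z) := by
    rw [Pi.mul_apply, hψ.eq_of_dvd_sub (b := c * y) (by simp),
      hφ.eq_of_dvd_sub (b := q * z) (by simp), hψ.map_mul, hφ.map_mul, mul_mul_mul_comm]
  rw [hg r _ (hS.image_mul_add_mul hqc hT), Finset.sum_image (hS.injOn_mul_add_mul hqc hT),
    hg₁ r S hS, hg₂ r T hT, Finset.sum_mul_sum, Finset.mul_sum, Finset.sum_product]
  refine Finset.sum_congr rfl fun y _ => ?_
  rw [Finset.mul_sum]
  refine Finset.sum_congr rfl fun z _ => ?_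
  rw [hψφ, eT_toComplex_mul_add_mul_div hq hc]
  ring

end IsDirichletChar

theorem ig_mul_two : ig * 2 = ωg * ωg := by
  ext <;> simp [ig, ωg]

theorem ωg_dvd_iff (m : GaussianInt) : ωg ∣ m ↔ Even (m.re + m.im) := by
  constructor
  · rintro ⟨k, rfl⟩
    exact ⟨k.re, by simp [ωg]⟩
  · rintro ⟨k, hk⟩
    exact ⟨⟨k, k - m.re⟩, by simp [ωg, Zsqrtd.ext_iff, eq_sub_of_add_eq' hk, sub_add_eq_add_sub]⟩

theorem two_dvd_iff (m : GaussianInt) : 2 ∣ m ↔ Even m.re ∧ Even m.im := by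
  rw [even_iff_two_dvd, even_iff_two_dvd]
  exact_mod_cast Zsqrtd.intCast_dvd (d := -1) 2 m

theorem ωg_dvd_two : ωg ∣ 2 :=
  (ωg_dvd_iff 2).2 (by decide)

theorem isCoprime_two_iff (m : GaussianInt) : IsCoprime m 2 ↔ ¬ ωg ∣ m := by
  constructor
  · intro h hm
    have : IsUnit ωg := h.isUnit_of_dvd' hm ωg_dvd_two
    simp [Zsqrtd.isUnit_iff_norm_isUnit, Zsqrtd.norm_def, ωg, Int.isUnit_iff] at this
  · intro h
    have norm_odd : Odd m.norm := by
      rw [ωg_dvd_iff] at h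
      rw [Zsqrtd.norm_def, ← Int.not_even_iff_odd]
      simpa [parity_simps, -Int.not_even_iff_odd] using h
    obtain ⟨k, hk⟩ := norm_odd
    refine ⟨star m, -k, ?_⟩
    have := Zsqrtd.norm_eq_mul_conj m
    rw [hk] at this
    push_cast at this
    linear_combination -this

theorem not_ωg_dvd_one : ¬ ωg ∣ 1 :=
  (isCoprime_two_iff 1).1 isCoprime_one_left

theorem isResidueSystem_two : IsResidueSystem 2 ({0, 1, ig, ωg} : Finset GaussianInt) := by
  intro z
  obtain hre | hre := Int.even_or_odd z.re <;> obtain him | him := Int.even_or_odd z.im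
  · refine ⟨0, ?_, ?_⟩ <;> simp [two_dvd_iff, ig, ωg, parity_simps, hre, him]
  · refine ⟨ig, ?_, ?_⟩ <;> simp [two_dvd_iff, ig, ωg, parity_simps, hre, him]
  · refine ⟨1, ?_, ?_⟩ <;> simp [two_dvd_iff, ig, ωg, parity_simps, hre, him]
  · refine ⟨ωg, ?_, ?_⟩ <;> simp [two_dvd_iff, ig, ωg, parity_simps, hre, him]

theorem IsPrimary.two_dvd_sub_one {c : GaussianInt} (hc : IsPrimary c) : 2 ∣ c - 1 := by
  refine Dvd.dvd.trans ⟨ig * ωg, ?_⟩ hc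
  linear_combination -ωg * ig_mul_two

theorem IsPrimary.not_ωg_dvd {c : GaussianInt} (hc : IsPrimary c) : ¬ ωg ∣ c := by
  have hdvd : ωg ∣ c - 1 := (dvd_pow_self ωg three_ne_zero).trans hc
  rw [dvd_iff_dvd_of_dvd_sub hdvd]
  exact not_ωg_dvd_one

theorem IsDirichletChar.eq_one_of_isPrimary {ψ : GaussianInt → ℂ} (hψ : IsDirichletChar 2 ψ)
    {c : GaussianInt} (hc : IsPrimary c) : ψ c = 1 :=
  (hψ.eq_of_dvd_sub hc.two_dvd_sub_one).trans hψ.map_one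

theorem isDirichletChar_psi1 : IsDirichletChar 2 psi1 := by
  refine ⟨?_, fun a b => ?_, fun a b h => ?_, fun a h => ?_, fun a h => ?_⟩
  · simp [psi1, isCoprime_one_left]
  · simp [psi1, IsCoprime.mul_left_iff, ← ite_and, and_comm]
  · obtain ⟨k, hk⟩ := h
    simp only [psi1, sub_eq_iff_eq_add'.1 hk, IsCoprime.add_mul_left_left_iff]
  · simp [psi1, h]
  · simp [psi1, h]

theorem psi1_ig : psi1 ig = 1 := by
  have : IsCoprime ig 2 := by simp [isCoprime_two_iff, ωg_dvd_iff, ig]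
  simp [psi1, this]

theorem psi2_eq (m : GaussianInt) :
    psi2 m = if Even m.im then (if Even m.re then 0 else 1) else if Even m.re then -1 else 0 := by
  simp only [psi2, two_dvd_iff]
  by_cases hre : Even m.re <;> by_cases him : Even m.im <;>
    simp [hre, him, ig, ← Int.not_even_iff_odd]

theorem psi2_ig : psi2 ig = -1 := by
  simp [psi2_eq, ig]

theorem isDirichletChar_psi2 : IsDirichletChar 2 psi2 := by
  refine ⟨?_, fun a b => ?_, fun a b h => ?_, fun a h => ?_, fun a h => ?_⟩
  · simp [psi2]
  · simp only [psi2_eq]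
    by_cases har : Even a.re <;> by_cases hai : Even a.im <;> by_cases hbr : Even b.re <;>
      by_cases hbi : Even b.im <;> simp [har, hai, hbr, hbi, parity_simps]
  · rw [two_dvd_iff, Zsqrtd.re_sub, Zsqrtd.im_sub, Int.even_sub, Int.even_sub] at h
    simp only [psi2_eq, h]
  · rw [isCoprime_two_iff, ωg_dvd_iff, Int.even_add] at h
    by_cases hre : Even a.re <;> by_cases him : Even a.im <;>
      simp_all [psi2_eq, -Int.not_even_iff_odd]
  · rw [isCoprime_two_iff, not_not, ωg_dvd_iff, Int.even_add] at h
    by_cases hre : Even a.re <;> by_cases him : Even a.im <;>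
      simp_all [psi2_eq, -Int.not_even_iff_odd]

theorem IsDirichletChar.isGaussSumChar_two {ψ : GaussianInt → ℂ} (hψ : IsDirichletChar 2 ψ) :
    IsGaussSumChar 2 ψ fun r => (-1) ^ r.im + ψ ig * (-1) ^ r.re := by
  have ψ_zero : ψ 0 = 0 := hψ.eq_zero (by simp [isCoprime_two_iff])
  have ψ_ωg : ψ ωg = 0 := hψ.eq_zero (by simp [isCoprime_two_iff])
  convert hψ.isGaussSumChar two_ne_zero isResidueSystem_two using 2 with r
  simp only [map_ofNat GaussianInt.toComplex 2, eT_toComplex_div_two]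
  rw [Finset.sum_insert (by simp [ig, ωg, Zsqrtd.ext_iff]),
    Finset.sum_insert (by simp [ig, ωg, Zsqrtd.ext_iff]),
    Finset.sum_pair (by simp [ig, ωg, Zsqrtd.ext_iff])]
  simp [ψ_zero, ψ_ωg, hψ.map_one, ig]

theorem eq_of_isUnit_of_dvd_intCast_sub {R : Type*} [CommRing R] {p : R} (hp : ¬ p ∣ 2)
    {s t : ℤ} (hs : IsUnit s) (ht : IsUnit t) (h : p ∣ (s : R) - t) : s = t := by
  refine (Int.isUnit_eq_or_eq_neg hs ht).resolve_right fun hst => hp ?_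
  have hdvd : p ∣ t * 2 := by
    rw [← dvd_neg]
    convert h using 1
    rw [hst]
    push_cast
    ring
  exact (ht.map (Int.castRingHom R)).dvd_mul_left.1 hdvd

namespace IsQuadSym

variable {χ : GaussianInt → GaussianInt → ℤ}

theorem eq_of_dvd_pow_sub (hχ : IsQuadSym χ) {p a : GaussianInt} (hp : Prime p)
    (hodd : ¬ ωg ∣ p) (ha : ¬ p ∣ a) {s : ℤ} (hs : IsUnit s)
    (h : p ∣ a ^ ((p.norm.toNat - 1) / 2) - (s : GaussianInt)) : χ a p = s := by
  have hp2 : ¬ p ∣ 2 := fun h2 =>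
    hp.not_isUnit (((isCoprime_two_iff p).2 hodd).isUnit_of_dvd' dvd_rfl h2)
  obtain ⟨hunit, hdvd⟩ := hχ.val_prime p a hp hodd ha
  refine eq_of_isUnit_of_dvd_intCast_sub hp2 (Int.isUnit_iff.2 hunit) hs ?_
  simpa using dvd_sub h hdvd

theorem isDirichletChar_of_prime (hχ : IsQuadSym χ) {p : GaussianInt} (hp : Prime p)
    (hodd : ¬ ωg ∣ p) : IsDirichletChar p fun a => (χ a p : ℂ) := by
  have val {a : GaussianInt} (ha : ¬ p ∣ a) := hχ.val_prime p a hp hodd ha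
  have val_isUnit {a : GaussianInt} (ha : ¬ p ∣ a) : IsUnit (χ a p) := Int.isUnit_iff.2 (val ha).1
  have eq_zero {a : GaussianInt} (ha : p ∣ a) : χ a p = 0 := hχ.zero_of_dvd p a hp ha
  have isCoprime_iff (a : GaussianInt) : IsCoprime a p ↔ ¬ p ∣ a := by
    rw [isCoprime_comm, hp.irreducible.coprime_iff_not_dvd]
  refine ⟨?_, fun a b => ?_, fun a b h => ?_, fun a h => ?_, fun a h => ?_⟩
  · have : χ 1 p = 1 :=
      hχ.eq_of_dvd_pow_sub hp hodd (fun h => hp.not_isUnit (isUnit_of_dvd_one h)) isUnit_one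
        (by simp)
    simp [this]
  · suffices χ (a * b) p = χ a p * χ b p by simp [this]
    by_cases ha : p ∣ a
    · rw [eq_zero ha, eq_zero (ha.mul_right b), zero_mul]
    by_cases hb : p ∣ b
    · rw [eq_zero hb, eq_zero (hb.mul_left a), mul_zero]
    refine hχ.eq_of_dvd_pow_sub hp hodd (hp.not_dvd_mul ha hb)
      ((val_isUnit ha).mul (val_isUnit hb)) ?_
    rw [mul_pow, Int.cast_mul]
    exact dvd_mul_sub_mul (val ha).2 (val hb).2
  · suffices χ a p = χ b p by simp [this]
    by_cases hb : p ∣ b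
    · rw [eq_zero hb, eq_zero ((dvd_iff_dvd_of_dvd_sub h).2 hb)]
    have ha : ¬ p ∣ a := mt (dvd_iff_dvd_of_dvd_sub h).1 hb
    refine hχ.eq_of_dvd_pow_sub hp hodd ha (val_isUnit hb) ?_
    rw [← sub_add_sub_cancel]
    exact dvd_add (h.trans (sub_dvd_pow_sub_pow a b _)) (val hb).2
  · rcases (val ((isCoprime_iff a).1 h)).1 with h1 | h1 <;> simp [h1]
  · simp [eq_zero (not_not.1 (mt (isCoprime_iff a).2 h))]

theorem isDirichletChar (hχ : IsQuadSym χ) {n : GaussianInt} (hn : ¬ ωg ∣ n) :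
    IsDirichletChar n fun a => (χ a n : ℂ) := by
  induction n using UniqueFactorizationMonoid.induction_on_prime with
  | h₁ => exact absurd (dvd_zero ωg) hn
  | h₂ u hu => simpa [hχ.unit_den _ u hu] using IsDirichletChar.of_isUnit hu
  | h₃ m p _ hp ih =>
    have hoddp : ¬ ωg ∣ p := fun h => hn (h.mul_right m)
    have hoddm : ¬ ωg ∣ m := fun h => hn (h.mul_left p)
    convert (hχ.isDirichletChar_of_prime hp hoddp).mul (ih hoddm) using 2 with a
    simp [hχ.mul_den a p m hoddp hoddm]

theorem isUnit_of_isCoprime (hχ : IsQuadSym χ) {a n : GaussianInt} (hn : ¬ ωg ∣ n)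
    (h : IsCoprime a n) : IsUnit (χ a n) := by
  have := (hχ.isDirichletChar hn).norm_eq_one h
  rw [Complex.norm_intCast] at this
  exact Int.isUnit_iff_abs_eq.2 (by exact_mod_cast this)

theorem two_eq_ig (hχ : IsQuadSym χ) {n : GaussianInt} (hn : ¬ ωg ∣ n) : χ 2 n = χ ig n := by
  have map_mul (a b : GaussianInt) : χ (a * b) n = χ a n * χ b n := by
    exact_mod_cast (hχ.isDirichletChar hn).map_mul a b
  have hω : IsCoprime ωg n :=
    ((isCoprime_two_iff n).2 hn).symm.of_isCoprime_of_dvd_left ωg_dvd_two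
  have : χ ig n * χ 2 n = 1 := by
    rw [← map_mul, ig_mul_two, map_mul, Int.isUnit_mul_self (hχ.isUnit_of_isCoprime hn hω)]
  exact (Int.eq_of_mul_eq_one this).symm

end IsQuadSym

theorem IsGaussSum.isGaussSumChar {χ : GaussianInt → GaussianInt → ℤ}
    {g : GaussianInt → GaussianInt → ℂ} (hg : IsGaussSum χ g) {n : GaussianInt} (hn : n ≠ 0) :
    IsGaussSumChar n (fun a => (χ a n : ℂ)) fun r => g r n :=
  fun r S hS => hg r n hn S hS

theorem gauss_sum_psi_factorization_general {χ : GaussianInt → GaussianInt → ℤ} (hχ : IsQuadSym χ)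
    {c : GaussianInt} (hc : ¬ ωg ∣ c) {ψ : GaussianInt → ℂ} (hψ : IsDirichletChar 2 ψ)
    {g2 : GaussianInt → ℂ} (hg2 : IsGaussSumChar (2 * c) (fun m => ψ m * (χ m c : ℂ)) g2)
    {g : GaussianInt → GaussianInt → ℂ} (hg : IsGaussSum χ g) (r : GaussianInt) :
    g2 r = ψ c * (χ ig c : ℂ) * ((-1 : ℂ) ^ r.im + ψ ig * (-1 : ℂ) ^ r.re) * g r c := by
  have hc0 : c ≠ 0 := by
    rintro rfl
    exact hc (dvd_zero ωg)
  rw [hψ.gaussSum_mul two_ne_zero hc0 ((isCoprime_two_iff c).2 hc).symm (hχ.isDirichletChar hc) hg2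
    hψ.isGaussSumChar_two (hg.isGaussSumChar hc0) r, hχ.two_eq_ig hc]
  ring

/-- the factorization (2.3) of the paper for the Gauss sum of the character
`ψ_j · (·/c)` modulo `2c`:
`g(r, ψ_j·(·/c)) = (i/c)((−1)^{Im r} + (−1)^{Re r + j − 1}) g(r, c)`. -/
theorem gauss_sum_psi_factorization
    (χ : GaussianInt → GaussianInt → ℤ) (hχ : IsQuadSym χ)
    (c : GaussianInt) (hc : IsPrimary c) (j : ℕ) (hj : j = 1 ∨ j = 2)
    (g2 : GaussianInt → ℂ)
    (hg2 : IsGaussSumChar (2 * c) (fun m => (if j = 1 then psi1 m else psi2 m) * (χ m c : ℂ)) g2)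
    (g : GaussianInt → GaussianInt → ℂ) (hg : IsGaussSum χ g) (r : GaussianInt) :
    g2 r = (χ ig c : ℂ) * ((-1 : ℂ) ^ r.im + (-1 : ℂ) ^ (r.re + (j : ℤ) - 1)) * g r c := by
  rcases hj with rfl | rfl
  · simpa [isDirichletChar_psi1.eq_one_of_isPrimary hc, psi1_ig] using
      gauss_sum_psi_factorization_general hχ hc.not_ωg_dvd isDirichletChar_psi1 hg2 hg r
  · simpa [isDirichletChar_psi2.eq_one_of_isPrimary hc, psi2_ig, add_sub_assoc, zpow_add₀] using
      gauss_sum_psi_factorization_general hχ hc.not_ωg_dvd isDirichletChar_psi2 hg2 hg r
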